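/- Let p be an odd prime, Δ an integer not divisible by p, and set ε = 1 if the image of Δ in ℤ/pℤ is a square and ε = −1 otherwise. For natural numbers T and ℓ, let N_{T,ℓ} be the number of pairs (x, y) ∈ (ℤ/p^ℓℤ)² with x² − Δ̄·y² equal to the image of p^{2T} in ℤ/p^ℓℤ. Then for all real a, z with |a| < 1 and |z| < 1, setting w = z/p, the double series indexed by (T,ℓ) ∈ ℕ×ℕ with terms a^T · z^ℓ · N_{T,ℓ}/p^{2ℓ} converges with sum (1 − ε·w/p)(1 − a²w²) / ((1 − w)(1 − a)(1 − a·w²)(1 − ε·a·w)). -/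

import Mathlib

/-!
Modulo `p ^ l` with `l ≥ 2`, a solution of `x ^ 2 - Δ * y ^ 2 = p ^ (2 * T)` with both coordinates
divisible by `p` is `p` times a solution for `(T - 1, l - 2)`; the other solutions are smooth
points, and Hensel's lemma lifts them from the conic `x ^ 2 - Δ * y ^ 2 = c` over `𝔽_p`, whose
points are counted with a Jacobi sum. After division by `p ^ l`, the first kind contributes the
count for `(T - 1, l - 2)` and the second a constant. Summing over `l` thus gives row sums with
`R (T + 1) = K + w ^ 2 * R T`, and then the double sum satisfies a linear equation with coefficient
`1 - a * w ^ 2`.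
-/

open Function

section Counting

lemma ncard_eq_mul_of_ncard_fiber {α β : Type*} [Finite α] [Finite β] {g : α → β} {s : Set α}
    {t : Set β} {k : ℕ} (hg : Set.MapsTo g s t) (hk : ∀ b ∈ t, (s ∩ g ⁻¹' {b}).ncard = k) :
    s.ncard = k * t.ncard := by
  classical
  have := Fintype.ofFinite α
  have := Fintype.ofFinite β
  have hfiber : ∀ b ∈ t.toFinset, (s.toFinset.filter (g · = b)).card = k := by
    intro b hb
    rw [← hk b (Set.mem_toFinset.1 hb), Set.ncard_eq_toFinset_card']
    congr 1
    ext
    simp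
  rw [Set.ncard_eq_toFinset_card', Set.ncard_eq_toFinset_card',
    Finset.card_eq_sum_card_fiberwise (f := g) (t := t.toFinset) (by simpa using hg),
    Finset.sum_congr rfl hfiber, Finset.sum_const, smul_eq_mul, mul_comm]

lemma card_ker_prodMap_self {G H : Type*} [AddGroup G] [AddGroup H] (f : G →+ H) :
    Nat.card (f.prodMap f).ker = Nat.card f.ker ^ 2 := by
  rw [AddMonoidHom.ker_prodMap, Nat.card_congr (AddSubgroup.prodEquiv _ _).toEquiv, Nat.card_prod,
    sq]

lemma card_ker_mul_card_of_surjective {G H : Type*} [AddGroup G] [AddGroup H] {f : G →+ H}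
    (hf : Surjective f) : Nat.card f.ker * Nat.card H = Nat.card G := by
  rw [← f.ker.card_mul_index, AddSubgroup.index_ker, AddMonoidHom.range_eq_top.2 hf,
    AddSubgroup.card_top]

lemma ncard_preimage_eq_card_ker_mul {G H : Type*} [AddGroup G] [Finite G] [AddGroup H] [Finite H]
    (f : G →+ H) {t : Set H} (ht : t ⊆ Set.range f) :
    (f ⁻¹' t).ncard = Nat.card f.ker * t.ncard := by
  refine ncard_eq_mul_of_ncard_fiber (Set.mapsTo_preimage f t) fun b hb => ?_
  obtain ⟨a, rfl⟩ := ht hb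
  have hcoset : f ⁻¹' t ∩ f ⁻¹' {f a} = (a + ·) '' (f.ker : Set G) := by
    ext x
    constructor
    · rintro ⟨-, hx⟩
      exact ⟨-a + x, by simp_all [AddMonoidHom.mem_ker], by simp⟩
    · rintro ⟨k, hk, rfl⟩
      simp_all [AddMonoidHom.mem_ker]
  rw [hcoset, Set.ncard_image_of_injective _ (add_right_injective a)]
  rfl

end Counting

section NormForm

variable {R S : Type*} [CommRing R] [CommRing S]

/-- The solutions of `x ^ 2 - Δ * y ^ 2 = c` over `R`: the fiber over `c` of the norm form of
`R[√Δ]`. -/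
def normFiber (Δ c : R) : Set (R × R) := {v | v.1 ^ 2 - Δ * v.2 ^ 2 = c}

lemma mem_normFiber {Δ c : R} {v : R × R} : v ∈ normFiber Δ c ↔ v.1 ^ 2 - Δ * v.2 ^ 2 = c :=
  Iff.rfl

/-- The primitive points of `normFiber Δ c`. Over the local rings at which this is used, a vector
is primitive exactly when one of its coordinates is a unit. -/
def primitiveNormFiber (Δ c : R) : Set (R × R) :=
  {v ∈ normFiber Δ c | IsUnit v.1 ∨ IsUnit v.2}

lemma primitiveNormFiber_subset (Δ c : R) : primitiveNormFiber Δ c ⊆ normFiber Δ c :=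
  Set.sep_subset _ _

variable {f : R →+* S}

lemma isLocalHom_of_ker_sq_eq_bot (hf : Surjective f) (hI : RingHom.ker f ^ 2 = ⊥) :
    IsLocalHom f where
  map_nonunit x hx := by
    obtain ⟨y, hy⟩ := hf ↑hx.unit⁻¹
    have hmem : x * y - 1 ∈ RingHom.ker f := by simp [RingHom.mem_ker, hy]
    have hsq : (x * y - 1) ^ 2 = 0 := by simpa [hI] using Ideal.pow_mem_pow hmem 2
    exact IsUnit.of_mul_eq_one (y * (2 - x * y)) (by linear_combination -hsq)

/-- The derivative at `v` of the norm form, restricted to increments in the ideal `I`. -/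
def normFormDeriv (Δ : R) (v : R × R) (I : Ideal R) : I × I →ₗ[R] I :=
  (2 * v.1) • LinearMap.fst R I I - (2 * Δ * v.2) • LinearMap.snd R I I

lemma normFormDeriv_surjective {Δ : R} (h2 : IsUnit (2 : R)) (hΔ : IsUnit Δ) {v : R × R}
    (hv : IsUnit v.1 ∨ IsUnit v.2) (I : Ideal R) : Surjective (normFormDeriv Δ v I) := by
  intro i
  rcases hv with hv | hv
  · obtain ⟨u, hu⟩ := h2.mul hv
    exact ⟨(((u⁻¹ : Rˣ) : R) • i, 0), by simp [normFormDeriv, ← hu, smul_smul]⟩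
  · obtain ⟨u, hu⟩ := (h2.mul hΔ).mul hv
    exact ⟨(0, -((u⁻¹ : Rˣ) : R) • i), by simp [normFormDeriv, ← hu, smul_smul]⟩

lemma ncard_normFormDeriv_fiber [Finite R] {Δ : R} (h2 : IsUnit (2 : R)) (hΔ : IsUnit Δ)
    {v : R × R} (hv : IsUnit v.1 ∨ IsUnit v.2) (I : Ideal R) (i : I) :
    (normFormDeriv Δ v I ⁻¹' {i}).ncard = Nat.card I := by
  have hsurj := normFormDeriv_surjective h2 hΔ hv I
  have hker := card_ker_mul_card_of_surjective (f := (normFormDeriv Δ v I).toAddMonoidHom) hsurj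
  rw [Nat.card_prod] at hker
  rw [← Nat.eq_of_mul_eq_mul_right Nat.card_pos hker]
  simpa using ncard_preimage_eq_card_ker_mul (normFormDeriv Δ v I).toAddMonoidHom
    (t := {i}) (by simpa using hsurj i)

-- If `I ^ 2 = 0`, the Taylor expansion of the norm form at `v` stops at its linear term on `I × I`.
lemma add_mem_normFiber_iff {Δ c : R} {v : R × R} {I : Ideal R} (hI : I ^ 2 = ⊥) (s : I × I) :
    (v.1 + s.1, v.2 + s.2) ∈ normFiber Δ c ↔
      (normFormDeriv Δ v I s : R) = c - (v.1 ^ 2 - Δ * v.2 ^ 2) := by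
  have hsq (i : I) : (i : R) ^ 2 = 0 := by simpa [hI] using Ideal.pow_mem_pow i.2 2
  have htaylor : (v.1 + s.1) ^ 2 - Δ * (v.2 + s.2) ^ 2
      = v.1 ^ 2 - Δ * v.2 ^ 2 + normFormDeriv Δ v I s := by
    simp only [normFormDeriv, LinearMap.sub_apply, LinearMap.smul_apply, LinearMap.fst_apply,
      LinearMap.snd_apply, Submodule.coe_sub, Submodule.coe_smul, smul_eq_mul]
    linear_combination hsq s.1 - Δ * hsq s.2
  rw [mem_normFiber, htaylor, eq_sub_iff_add_eq']

variable [Finite R] {Δ : R}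

lemma ncard_primitiveNormFiber_fiber [IsLocalHom f] (hI : RingHom.ker f ^ 2 = ⊥)
    (h2 : IsUnit (2 : R)) (hΔ : IsUnit Δ) (c : R) {v : R × R}
    (hv : Prod.map f f v ∈ primitiveNormFiber (f Δ) (f c)) :
    (primitiveNormFiber Δ c ∩ Prod.map f f ⁻¹' {Prod.map f f v}).ncard
      = Nat.card (RingHom.ker f) := by
  have hv_unit : IsUnit v.1 ∨ IsUnit v.2 := by simpa using hv.2
  have hdefect : c - (v.1 ^ 2 - Δ * v.2 ^ 2) ∈ RingHom.ker f := by
    have h : f v.1 ^ 2 - f Δ * f v.2 ^ 2 = f c := hv.1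
    simp [RingHom.mem_ker, ← h]
  rw [← ncard_normFormDeriv_fiber h2 hΔ hv_unit (RingHom.ker f) ⟨_, hdefect⟩]
  have hinj : Injective fun s : RingHom.ker f × RingHom.ker f => (v.1 + s.1.1, v.2 + s.2.1) := by
    intro s t h
    obtain ⟨h₁, h₂⟩ := Prod.mk.inj h
    exact Prod.ext (Subtype.ext (add_left_cancel h₁)) (Subtype.ext (add_left_cancel h₂))
  rw [← Set.ncard_image_of_injective _ hinj]
  congr 1
  ext w
  constructor
  · rintro ⟨hw, hwv⟩
    obtain ⟨h₁, h₂⟩ : f w.1 = f v.1 ∧ f w.2 = f v.2 := by simpa [Prod.ext_iff] using hwv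
    refine ⟨(⟨w.1 - v.1, by simp [RingHom.mem_ker, h₁]⟩,
      ⟨w.2 - v.2, by simp [RingHom.mem_ker, h₂]⟩),
      Subtype.ext ((add_mem_normFiber_iff hI _).1 ?_), ?_⟩
    · simpa using hw.1
    · simp
  · rintro ⟨⟨⟨s, hs⟩, ⟨t, ht⟩⟩, hst, rfl⟩
    have hmap : Prod.map f f (v.1 + s, v.2 + t) = Prod.map f f v := by
      simp [(RingHom.mem_ker).1 hs, (RingHom.mem_ker).1 ht, Prod.map]
    refine ⟨⟨(add_mem_normFiber_iff hI _).2 (congrArg Subtype.val hst), ?_⟩, hmap⟩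
    rw [← hmap] at hv
    simpa only [Prod.map, isUnit_map_iff] using hv.2

/-- Hensel lifting: the lifts of a primitive point form a torsor under the kernel of the surjective
derivative `ker f × ker f → ker f`. -/
theorem ncard_primitiveNormFiber_of_ker_sq_eq_bot (hf : Surjective f)
    (hI : RingHom.ker f ^ 2 = ⊥) (h2 : IsUnit (2 : R)) (hΔ : IsUnit Δ) (c : R) :
    (primitiveNormFiber Δ c).ncard
      = Nat.card (RingHom.ker f) * (primitiveNormFiber (f Δ) (f c)).ncard := by
  have := isLocalHom_of_ker_sq_eq_bot hf hI
  have : Finite S := Finite.of_surjective f hf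
  refine ncard_eq_mul_of_ncard_fiber (g := Prod.map f f) ?_ fun b hb => ?_
  · rintro v ⟨hv, hv_unit⟩
    exact ⟨by simpa [normFiber] using congrArg f hv, by simpa using hv_unit⟩
  · obtain ⟨v, rfl⟩ := hf.prodMap hf b
    exact ncard_primitiveNormFiber_fiber hI h2 hΔ c hb

end NormForm

lemma primitiveNormFiber_eq_of_ne_zero {K : Type*} [Field K] (d : K) {c : K} (hc : c ≠ 0) :
    primitiveNormFiber d c = normFiber d c := by
  refine (primitiveNormFiber_subset d c).antisymm fun v hv => ⟨hv, ?_⟩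
  by_contra! h
  simp_all [normFiber]

lemma ncard_primitiveNormFiber_zero_add_one {K : Type*} [Field K] [Finite K] (d : K) :
    (primitiveNormFiber d 0).ncard + 1 = (normFiber d 0).ncard := by
  have hdiff : primitiveNormFiber d 0 = normFiber d 0 \ {0} := by
    ext v
    simp [primitiveNormFiber, Prod.ext_iff, imp_iff_not_or, and_or_left]
  rw [hdiff, Set.ncard_sdiff_singleton_add_one (by simp [normFiber])]

section FiniteField

variable {F : Type*} [Field F] [Fintype F] [DecidableEq F]

lemma sum_comp_sq (hF : ringChar F ≠ 2) (g : F → ℤ) :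
    ∑ y, g (y ^ 2) = ∑ u, (quadraticChar F u + 1) * g u := by
  rw [← Finset.sum_fiberwise Finset.univ (· ^ 2) fun y => g (y ^ 2)]
  refine Finset.sum_congr rfl fun u _ => ?_
  rw [← quadraticChar_card_sqrts hF u,
    Finset.sum_congr rfl fun y hy => congrArg g (Finset.mem_filter.1 hy).2, Finset.sum_const,
    nsmul_eq_mul]
  congr 3
  ext
  simp

lemma sum_quadraticChar_add_mul (hF : ringChar F ≠ 2) (c : F) {d : F} (hd : d ≠ 0) :
    ∑ u, quadraticChar F (c + d * u) = 0 := by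
  rw [← quadraticChar_sum_zero hF]
  exact ((Equiv.mulLeft₀ d hd).trans (Equiv.addLeft c)).sum_comp (quadraticChar F)

lemma sum_quadraticChar_mul_add_mul (hF : ringChar F ≠ 2) {c d : F} (hc : c ≠ 0) (hd : d ≠ 0) :
    ∑ u, quadraticChar F u * quadraticChar F (c + d * u) = -quadraticChar F d := by
  set χ := quadraticChar F
  have hjacobi : ∑ v, χ v * χ (1 - v) = -χ (-1) := by
    have h := jacobiSum_nontrivial_inv (quadraticChar_ne_one hF)
    rwa [(quadraticChar_isQuadratic F).inv] at h
  have hrescale (v : F) : χ (-c / d * v) * χ (c + d * (-c / d * v))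
      = χ (-d) * (χ v * χ (1 - v)) := by
    have harg : -c / d * v * (c + d * (-c / d * v)) = (c / d) ^ 2 * (-d * (v * (1 - v))) := by
      field_simp
      ring
    rw [← map_mul, harg, map_mul, quadraticChar_sq_one' (div_ne_zero hc hd), one_mul, map_mul,
      map_mul]
  rw [← Equiv.sum_comp (Equiv.mulLeft₀ (-c / d) (div_ne_zero (neg_ne_zero.2 hc) hd))]
  simp only [Equiv.mulLeft₀_apply, hrescale]
  rw [← Finset.mul_sum, hjacobi, mul_neg, ← map_mul, neg_mul_neg, mul_one]

lemma ncard_normFiber_eq_sum (hF : ringChar F ≠ 2) (d c : F) :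
    ((normFiber d c).ncard : ℤ) = Fintype.card F + ∑ y, quadraticChar F (c + d * y ^ 2) := by
  classical
  have hcard : (normFiber d c).ncard = ∑ y : F, {x : F | x ^ 2 = c + d * y ^ 2}.toFinset.card := by
    rw [Set.ncard_eq_toFinset_card', Finset.card_eq_sum_card_fiberwise (f := Prod.snd)
      (t := Finset.univ) (by simp)]
    refine Finset.sum_congr rfl fun y _ => Finset.card_nbij' Prod.fst (·, y) ?_ ?_ ?_ ?_ <;>
      simp +contextual [mem_normFiber, Set.MapsTo, Set.LeftInvOn, sub_eq_iff_eq_add]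
  rw [hcard]
  push_cast
  simp only [quadraticChar_card_sqrts hF, Finset.sum_add_distrib, Finset.sum_const,
    Finset.card_univ, nsmul_one, add_comm]

theorem ncard_normFiber_of_ne_zero (hF : ringChar F ≠ 2) {d c : F} (hd : d ≠ 0) (hc : c ≠ 0) :
    ((normFiber d c).ncard : ℤ) = Fintype.card F - quadraticChar F d := by
  rw [ncard_normFiber_eq_sum hF, sum_comp_sq hF fun u => quadraticChar F (c + d * u)]
  simp only [add_mul, one_mul, Finset.sum_add_distrib, sum_quadraticChar_mul_add_mul hF hc hd,
    sum_quadraticChar_add_mul hF c hd]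
  ring

theorem ncard_normFiber_zero (hF : ringChar F ≠ 2) (d : F) :
    ((normFiber d 0).ncard : ℤ)
      = Fintype.card F + (Fintype.card F - 1) * quadraticChar F d := by
  have hsq (y : F) : quadraticChar F (0 + d * y ^ 2)
      = quadraticChar F d - if y = 0 then quadraticChar F d else 0 := by
    rcases eq_or_ne y 0 with rfl | hy
    · simp
    · rw [zero_add, map_mul, quadraticChar_sq_one' hy, mul_one, if_neg hy, sub_zero]
  simp only [ncard_normFiber_eq_sum hF, hsq, Finset.sum_sub_distrib, Finset.sum_const,
    Finset.card_univ, Finset.sum_ite_eq', Finset.mem_univ, if_true, nsmul_eq_mul]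
  ring

end FiniteField

section PrimePowerModulus

lemma natCast_mul_eq_zero_iff_castHom {n m N : ℕ} (hN : N = n * m) (hm : m ≠ 0) (x : ZMod N) :
    (m : ZMod N) * x = 0 ↔ ZMod.castHom (Dvd.intro m hN.symm) (ZMod n) x = 0 := by
  obtain ⟨k, rfl⟩ := ZMod.intCast_surjective x
  have hm' : (m : ℤ) ≠ 0 := Int.natCast_ne_zero.2 hm
  rw [map_intCast, ← Int.cast_natCast, ← Int.cast_mul, ZMod.intCast_zmod_eq_zero_iff_dvd,
    ZMod.intCast_zmod_eq_zero_iff_dvd, hN, Nat.cast_mul, mul_comm (n : ℤ),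
    mul_dvd_mul_iff_left hm']

lemma ker_castHom_sq_eq_bot {n N : ℕ} (h : n ∣ N) (h' : N ∣ n ^ 2) :
    RingHom.ker (ZMod.castHom h (ZMod n)) ^ 2 = ⊥ := by
  rw [eq_bot_iff, sq, Ideal.mul_le]
  intro x hx y hy
  obtain ⟨a, rfl⟩ := ZMod.intCast_surjective x
  obtain ⟨b, rfl⟩ := ZMod.intCast_surjective y
  rw [RingHom.mem_ker, map_intCast, ZMod.intCast_zmod_eq_zero_iff_dvd] at hx hy
  rw [Ideal.mem_bot, ← Int.cast_mul, ZMod.intCast_zmod_eq_zero_iff_dvd]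
  exact (Int.natCast_dvd_natCast.2 h').trans (by simpa [sq] using mul_dvd_mul hx hy)

lemma card_ker_castHom {n m N : ℕ} [NeZero N] (hN : N = n * m) :
    Nat.card (RingHom.ker (ZMod.castHom (Dvd.intro m hN.symm) (ZMod n))) = m := by
  have hn : n ≠ 0 := by
    rintro rfl
    exact NeZero.ne N (by simpa using hN)
  have : NeZero n := ⟨hn⟩
  have h := card_ker_mul_card_of_surjective
    (f := (ZMod.castHom (Dvd.intro m hN.symm) (ZMod n)).toAddMonoidHom)
    (ZMod.castHom_surjective (Dvd.intro m hN.symm))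
  rw [Nat.card_zmod, Nat.card_zmod] at h
  exact Nat.eq_of_mul_eq_mul_left (Nat.pos_of_ne_zero hn) ((mul_comm _ _).trans (h.trans hN))

lemma card_ker_mulLeft_natCast {n m N : ℕ} [NeZero N] (hN : N = n * m) :
    Nat.card (AddMonoidHom.mulLeft (m : ZMod N)).ker = m := by
  have hm : m ≠ 0 := by
    rintro rfl
    exact NeZero.ne N hN
  exact (Nat.card_congr (Equiv.subtypeEquivRight (natCast_mul_eq_zero_iff_castHom hN hm))).trans
    (card_ker_castHom hN)

variable {p : ℕ}

lemma not_isUnit_iff_natCast_dvd (hp : p.Prime) {l : ℕ} (hl : l ≠ 0) (x : ZMod (p ^ l)) :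
    ¬IsUnit x ↔ (p : ZMod (p ^ l)) ∣ x := by
  have hunit (n : ℕ) : IsUnit (n : ZMod (p ^ l)) ↔ ¬p ∣ n := by
    rw [ZMod.isUnit_iff_coprime, Nat.coprime_pow_right_iff (Nat.pos_of_ne_zero hl),
      Nat.coprime_comm, hp.coprime_iff_not_dvd]
  have : NeZero (p ^ l) := ⟨pow_ne_zero l hp.ne_zero⟩
  constructor
  · obtain ⟨n, rfl⟩ := ZMod.natCast_zmod_surjective x
    rw [hunit, not_not]
    exact Nat.cast_dvd_cast
  · exact fun hpx hx => (hunit p).1 (isUnit_of_dvd_unit hpx hx) dvd_rfl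

lemma isUnit_intCast_of_not_dvd (hp : p.Prime) {k : ℤ} (hk : ¬(p : ℤ) ∣ k) (l : ℕ) :
    IsUnit (k : ZMod (p ^ l)) := by
  rw [ZMod.coe_int_isUnit_iff_isCoprime, Nat.cast_pow]
  exact ((Nat.prime_iff_prime_int.1 hp).coprime_iff_not_dvd.2 hk).pow_left

theorem ncard_primitiveNormFiber_prime_pow (hp : p.Prime) (hp2 : p ≠ 2) {Δ : ℤ}
    (hΔ : ¬(p : ℤ) ∣ Δ) (c : ℤ) (l : ℕ) :
    (primitiveNormFiber (Δ : ZMod (p ^ (l + 1))) c).ncard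
      = p ^ l * (primitiveNormFiber (Δ : ZMod p) c).ncard := by
  have : NeZero p := ⟨hp.ne_zero⟩
  induction l with
  | zero => rw [zero_add, pow_one, pow_zero, one_mul]
  | succ l ih =>
    have h2 : ¬(p : ℤ) ∣ 2 := fun h =>
      hp2 ((Nat.prime_dvd_prime_iff_eq hp Nat.prime_two).1 (Int.natCast_dvd_natCast.1 h))
    have hlift := ncard_primitiveNormFiber_of_ker_sq_eq_bot
      (ZMod.castHom_surjective (Dvd.intro p (pow_succ p (l + 1)).symm))
      (ker_castHom_sq_eq_bot _ (by rw [sq]; exact mul_dvd_mul_left _ (dvd_pow_self p (by simp))))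
      (mod_cast isUnit_intCast_of_not_dvd hp h2 (l + 2))
      (isUnit_intCast_of_not_dvd hp hΔ (l + 2)) c
    rwa [map_intCast, map_intCast, card_ker_castHom (pow_succ p (l + 1)), ih, ← mul_assoc,
      ← pow_succ'] at hlift

lemma mem_normFiber_sdiff_primitiveNormFiber_iff (hp : p.Prime) {l : ℕ} (hl : l ≠ 0)
    {Δ c : ZMod (p ^ l)} {v : ZMod (p ^ l) × ZMod (p ^ l)} :
    v ∈ normFiber Δ c \ primitiveNormFiber Δ c ↔
      v ∈ normFiber Δ c ∧ (p : ZMod (p ^ l)) ∣ v.1 ∧ (p : ZMod (p ^ l)) ∣ v.2 := by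
  rw [← not_isUnit_iff_natCast_dvd hp hl, ← not_isUnit_iff_natCast_dvd hp hl, ← not_or,
    primitiveNormFiber, Set.sdiff_sep_self]
  rfl

lemma natCast_mul_mem_normFiber_iff {n m N : ℕ} (hN : N = n * m ^ 2) (hm : m ≠ 0) (Δ c : ℤ)
    (x y : ZMod N) :
    (m * x, m * y) ∈ normFiber (Δ : ZMod N) (m ^ 2 * c) ↔
      Prod.map (ZMod.castHom (Dvd.intro (m ^ 2) hN.symm) (ZMod n))
        (ZMod.castHom (Dvd.intro (m ^ 2) hN.symm) (ZMod n)) (x, y) ∈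
          normFiber (Δ : ZMod n) c := by
  have hfactor : (m * x) ^ 2 - Δ * (m * y) ^ 2 - m ^ 2 * c
      = ((m ^ 2 : ℕ) : ZMod N) * (x ^ 2 - Δ * y ^ 2 - c) := by
    push_cast
    ring
  rw [mem_normFiber, mem_normFiber, ← sub_eq_zero, hfactor,
    natCast_mul_eq_zero_iff_castHom hN (pow_ne_zero 2 hm)]
  simp only [map_sub, map_mul, map_pow, map_intCast, sub_eq_zero, Prod.map]

theorem ncard_normFiber_sdiff_primitiveNormFiber (hp : p.Prime) (Δ c : ℤ) (l : ℕ) :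
    (normFiber (Δ : ZMod (p ^ (l + 2))) (p ^ 2 * c) \
        primitiveNormFiber (Δ : ZMod (p ^ (l + 2))) (p ^ 2 * c)).ncard
      = p ^ 2 * (normFiber (Δ : ZMod (p ^ l)) c).ncard := by
  have : NeZero p := ⟨hp.ne_zero⟩
  set A := normFiber (Δ : ZMod (p ^ (l + 2))) (p ^ 2 * c) \
    primitiveNormFiber (Δ : ZMod (p ^ (l + 2))) (p ^ 2 * c)
  have hA (v) := mem_normFiber_sdiff_primitiveNormFiber_iff hp (Nat.succ_ne_zero (l + 1))
    (Δ := Δ) (c := p ^ 2 * c) (v := v)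
  let μ := AddMonoidHom.mulLeft (p : ZMod (p ^ (l + 2)))
  have hsplit : p ^ (l + 2) = p ^ l * p ^ 2 := pow_add p l 2
  let ρ := (ZMod.castHom (Dvd.intro (p ^ 2) hsplit.symm) (ZMod (p ^ l))).toAddMonoidHom
  have hρ : Surjective ρ := ZMod.castHom_surjective (Dvd.intro (p ^ 2) hsplit.symm)
  have hpreimage : μ.prodMap μ ⁻¹' A = ρ.prodMap ρ ⁻¹' normFiber (Δ : ZMod (p ^ l)) c := by
    ext ⟨x, y⟩
    exact (hA _).trans ((and_iff_left ⟨dvd_mul_right _ x, dvd_mul_right _ y⟩).trans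
      (natCast_mul_mem_normFiber_iff hsplit hp.ne_zero Δ c x y))
  have hA_range : A ⊆ Set.range (μ.prodMap μ) := by
    intro v hv
    obtain ⟨-, ⟨x, hx⟩, ⟨y, hy⟩⟩ := (hA v).1 hv
    exact ⟨(x, y), Prod.ext hx.symm hy.symm⟩
  have hμ_card : Nat.card (μ.prodMap μ).ker = p ^ 2 := by
    rw [card_ker_prodMap_self, card_ker_mulLeft_natCast (pow_succ p (l + 1))]
  have hρ_card : Nat.card (ρ.prodMap ρ).ker = (p ^ 2) ^ 2 := by
    rw [card_ker_prodMap_self]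
    exact congrArg (· ^ 2) (card_ker_castHom hsplit)
  have hcount := ncard_preimage_eq_card_ker_mul (μ.prodMap μ) hA_range
  rw [hpreimage, ncard_preimage_eq_card_ker_mul (ρ.prodMap ρ) fun b _ => hρ.prodMap hρ b, hμ_card,
    hρ_card, sq (p ^ 2), mul_assoc] at hcount
  exact (Nat.eq_of_mul_eq_mul_left (pow_pos hp.pos 2) hcount).symm

end PrimePowerModulus

section DoubleSeries

variable {𝕜 : Type*} [NormedField 𝕜] {M : ℕ → ℕ → 𝕜} {b d κ a w : 𝕜}

lemma exists_norm_le_mul_succ (h₀ : ∀ T, M T 0 = 1) (hb : ∀ l, M 0 (l + 1) = b)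
    (hd : ∀ T, M (T + 1) 1 = d) (hκ : ∀ T l, M (T + 1) (l + 2) = κ + M T l) :
    ∃ C, ∀ T l, ‖M T l‖ ≤ C * (T + 1) := by
  set C := 1 + ‖b‖ + ‖d‖ + ‖κ‖
  have hC : 1 ≤ C ∧ ‖b‖ ≤ C ∧ ‖d‖ ≤ C ∧ ‖κ‖ ≤ C := by
    refine ⟨?_, ?_, ?_, ?_⟩ <;> linarith [norm_nonneg b, norm_nonneg d, norm_nonneg κ]
  obtain ⟨h1C, hbC, hdC, hκC⟩ := hC
  refine ⟨C, fun T => ?_⟩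
  induction T with
  | zero => rintro (_ | l) <;> simp [h₀, hb, h1C, hbC]
  | succ T ih =>
    have hC_le : C ≤ C * ((T + 1 : ℕ) + 1) :=
      le_mul_of_one_le_right (by linarith) (le_add_of_nonneg_left (Nat.cast_nonneg _))
    rintro (_ | _ | l)
    · simpa [h₀] using h1C.trans hC_le
    · rw [hd]
      exact hdC.trans hC_le
    · rw [hκ]
      calc ‖κ + M T l‖ ≤ C + C * (T + 1) := (norm_add_le _ _).trans (add_le_add hκC (ih l))
        _ = C * ((T + 1 : ℕ) + 1) := by push_cast; ring

lemma tsum_pow_mul_of_succ_eq {g : ℕ → 𝕜} (hw : ‖w‖ < 1) (hg : ∀ l, g (l + 1) = b) :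
    ∑' l, w ^ l * g l = g 0 + b * w / (1 - w) := by
  have htail : HasSum (fun l => w ^ (l + 1) * g (l + 1)) (b * w * (1 - w)⁻¹) := by
    refine ((hasSum_geometric_of_norm_lt_one hw).mul_left (b * w)).congr_fun fun l => ?_
    rw [hg]
    ring
  rw [((hasSum_nat_add_iff (f := fun l => w ^ l * g l) 1).1 htail).tsum_eq, Finset.sum_range_one]
  ring

lemma tsum_pow_mul_of_shift_eq_add {g h : ℕ → 𝕜} (hw : ‖w‖ < 1)
    (hg : Summable fun l => w ^ l * g l) (hgh : ∀ l, h (l + 2) = κ + g l) :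
    ∑' l, w ^ l * h l = h 0 + w * h 1 + κ * w ^ 2 / (1 - w) + w ^ 2 * ∑' l, w ^ l * g l := by
  have htail : HasSum (fun l => w ^ (l + 2) * h (l + 2))
      (κ * w ^ 2 * (1 - w)⁻¹ + w ^ 2 * ∑' l, w ^ l * g l) := by
    refine (((hasSum_geometric_of_norm_lt_one hw).mul_left (κ * w ^ 2)).add
      (hg.hasSum.mul_left (w ^ 2))).congr_fun fun l => ?_
    rw [hgh]
    ring
  rw [((hasSum_nat_add_iff (f := fun l => w ^ l * h l) 2).1 htail).tsum_eq, Finset.sum_range_succ,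
    Finset.sum_range_one]
  ring

variable [CompleteSpace 𝕜]

lemma summable_pow_mul_of_norm_le {g : ℕ → 𝕜} {C : ℝ} (hw : ‖w‖ < 1) (hg : ∀ l, ‖g l‖ ≤ C) :
    Summable fun l => w ^ l * g l := by
  refine Summable.of_norm_bounded
    ((summable_geometric_of_lt_one (norm_nonneg w) hw).mul_right C) fun l => ?_
  rw [norm_mul, norm_pow]
  gcongr
  exact hg l

lemma summable_pow_mul_pow_mul {C : ℝ} (ha : ‖a‖ < 1) (hw : ‖w‖ < 1)
    (hM : ∀ T l, ‖M T l‖ ≤ C * (T + 1)) :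
    Summable fun x : ℕ × ℕ => a ^ x.1 * (w ^ x.2 * M x.1 x.2) := by
  have hT : Summable fun T : ℕ => ‖a‖ ^ T * (C * (T + 1)) := by
    have h := (summable_pow_mul_geometric_of_norm_lt_one 1 (r := ‖a‖) (by simpa)).add
      (summable_geometric_of_lt_one (norm_nonneg a) ha)
    refine (h.mul_left C).congr fun T => ?_
    ring
  have hC : 0 ≤ C := by simpa using (norm_nonneg _).trans (hM 0 0)
  refine Summable.of_norm_bounded (hT.mul_of_nonneg
    (summable_geometric_of_lt_one (norm_nonneg w) hw)
    (fun _ => by positivity) (fun _ => by positivity)) fun x => ?_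
  calc ‖a ^ x.1 * (w ^ x.2 * M x.1 x.2)‖ = ‖a‖ ^ x.1 * (‖w‖ ^ x.2 * ‖M x.1 x.2‖) := by
        simp only [norm_mul, norm_pow]
    _ ≤ ‖a‖ ^ x.1 * (‖w‖ ^ x.2 * (C * (x.1 + 1))) := by gcongr; exact hM _ _
    _ = ‖a‖ ^ x.1 * (C * (x.1 + 1)) * ‖w‖ ^ x.2 := by ring

theorem hasSum_of_recurrence (ha : ‖a‖ < 1) (hw : ‖w‖ < 1)
    (h₀ : ∀ T, M T 0 = 1) (hb : ∀ l, M 0 (l + 1) = b)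
    (hd : ∀ T, M (T + 1) 1 = d) (hκ : ∀ T l, M (T + 1) (l + 2) = κ + M T l) :
    HasSum (fun x : ℕ × ℕ => a ^ x.1 * (w ^ x.2 * M x.1 x.2))
      ((1 + b * w / (1 - w) + a * (1 + d * w + κ * w ^ 2 / (1 - w)) / (1 - a))
        / (1 - a * w ^ 2)) := by
  obtain ⟨C, hC⟩ := exists_norm_le_mul_succ h₀ hb hd hκ
  have hrow (T : ℕ) : Summable fun l => w ^ l * M T l := summable_pow_mul_of_norm_le hw (hC T)
  set R : ℕ → 𝕜 := fun T => ∑' l, w ^ l * M T l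
  set K := 1 + d * w + κ * w ^ 2 / (1 - w)
  have hR_zero : R 0 = 1 + b * w / (1 - w) := by
    simp only [R, tsum_pow_mul_of_succ_eq hw hb, h₀]
  have hR_succ (T : ℕ) : R (T + 1) = K + w ^ 2 * R T := by
    simp only [R, K, tsum_pow_mul_of_shift_eq_add hw (hrow T) (hκ T), h₀, hd, mul_comm w]
  obtain ⟨S, hS⟩ := summable_pow_mul_pow_mul ha hw hC
  have hSR : HasSum (fun T => a ^ T * R T) S :=
    hS.prod_fiberwise fun T => (hrow T).hasSum.mul_left (a ^ T)
  have hS_shift : S - R 0 = a * K * (1 - a)⁻¹ + a * w ^ 2 * S := by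
    have htail := (hasSum_nat_add_iff' (f := fun T => a ^ T * R T) 1).2 hSR
    rw [Finset.sum_range_one, pow_zero, one_mul] at htail
    refine htail.unique ((((hasSum_geometric_of_norm_lt_one ha).mul_left (a * K)).add
      (hSR.mul_left (a * w ^ 2))).congr_fun fun T => ?_)
    rw [hR_succ]
    ring
  have haw2 : ‖a * w ^ 2‖ < 1 := by
    rw [norm_mul, norm_pow]
    exact mul_lt_one_of_nonneg_of_lt_one_left (norm_nonneg a) ha (pow_le_one₀ (norm_nonneg w) hw.le)
  convert hS
  rw [div_eq_iff (isUnit_one_sub_of_norm_lt_one haw2).ne_zero, ← hR_zero]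
  linear_combination -hS_shift

end DoubleSeries

section NormCount

/-- The number of solutions of `x ^ 2 - Δ * y ^ 2 = p ^ (2 * T)` modulo `p ^ l`. -/
noncomputable def normCount (p : ℕ) (Δ : ℤ) (T l : ℕ) : ℕ :=
  (normFiber (Δ : ZMod (p ^ l)) ((p ^ (2 * T) : ℕ) : ZMod (p ^ l))).ncard

lemma normCount_zero_right (p : ℕ) (Δ : ℤ) (T : ℕ) : normCount p Δ T 0 = 1 := by
  have : Subsingleton (ZMod (p ^ 0)) := inferInstanceAs (Subsingleton (ZMod 1))
  rw [normCount, Set.ncard_eq_one]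
  exact ⟨0, Set.eq_singleton_iff_unique_mem.2
    ⟨Subsingleton.elim _ _, fun _ _ => Subsingleton.elim _ _⟩⟩

variable {p : ℕ} [Fact p.Prime] {Δ : ℤ}

lemma normCount_zero_succ (hp2 : p ≠ 2) (hΔ : ¬(p : ℤ) ∣ Δ) (l : ℕ) :
    (normCount p Δ 0 (l + 1) : ℤ) = p ^ l * (p - quadraticChar (ZMod p) Δ) := by
  have hp : p.Prime := Fact.out
  have hΔ0 : (Δ : ZMod p) ≠ 0 := mt (ZMod.intCast_zmod_eq_zero_iff_dvd Δ p).1 hΔ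
  have hprim : primitiveNormFiber (Δ : ZMod (p ^ (l + 1))) (1 : ℤ)
      = normFiber (Δ : ZMod (p ^ (l + 1))) (1 : ℤ) := by
    refine (primitiveNormFiber_subset _ _).antisymm fun v hv => by_contra fun hv' => ?_
    obtain ⟨hv1, hx, hy⟩ :=
      (mem_normFiber_sdiff_primitiveNormFiber_iff hp l.succ_ne_zero).1 ⟨hv, hv'⟩
    have hp_dvd : (p : ZMod (p ^ (l + 1))) ∣ 1 := by
      rw [mem_normFiber, Int.cast_one] at hv1
      exact hv1 ▸ dvd_sub (dvd_pow hx two_ne_zero) ((dvd_pow hy two_ne_zero).mul_left _)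
    exact (not_isUnit_iff_natCast_dvd hp l.succ_ne_zero 1).2 hp_dvd isUnit_one
  have hcount := ncard_primitiveNormFiber_prime_pow hp hp2 hΔ 1 l
  rw [hprim, Int.cast_one, Int.cast_one, primitiveNormFiber_eq_of_ne_zero _ one_ne_zero] at hcount
  rw [normCount, mul_zero, pow_zero, Nat.cast_one, hcount, Nat.cast_mul, Nat.cast_pow,
    ncard_normFiber_of_ne_zero ((ZMod.ringChar_zmod_n p).trans_ne hp2) hΔ0 one_ne_zero, ZMod.card]

lemma normCount_succ_one (hp2 : p ≠ 2) (Δ : ℤ) (T : ℕ) :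
    (normCount p Δ (T + 1) 1 : ℤ) = p + (p - 1) * quadraticChar (ZMod p) Δ := by
  have hzero : ((p ^ (2 * (T + 1)) : ℕ) : ZMod p) = 0 := by simp
  rw [normCount, pow_one, hzero, ncard_normFiber_zero ((ZMod.ringChar_zmod_n p).trans_ne hp2),
    ZMod.card]

lemma normCount_succ_add_two (hp2 : p ≠ 2) (hΔ : ¬(p : ℤ) ∣ Δ) (T l : ℕ) :
    (normCount p Δ (T + 1) (l + 2) : ℤ)
      = p ^ (l + 1) * ((p - 1) * (1 + quadraticChar (ZMod p) Δ)) + p ^ 2 * normCount p Δ T l := by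
  have hp : p.Prime := Fact.out
  let c : ℤ := p ^ (2 * T)
  have hc : ((p ^ (2 * (T + 1)) : ℕ) : ZMod (p ^ (l + 2))) = p ^ 2 * c := by
    simp only [c]
    push_cast
    ring
  have hconic : ((primitiveNormFiber (Δ : ZMod p) ((p ^ 2 * c : ℤ) : ZMod p)).ncard : ℤ)
      = (p - 1) * (1 + quadraticChar (ZMod p) Δ) := by
    have h := ncard_normFiber_zero ((ZMod.ringChar_zmod_n p).trans_ne hp2) (Δ : ZMod p)
    rw [← ncard_primitiveNormFiber_zero_add_one, ZMod.card] at h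
    have hzero : ((p ^ 2 * c : ℤ) : ZMod p) = 0 := by simp
    rw [hzero]
    push_cast at h
    linear_combination h
  have hprim := ncard_primitiveNormFiber_prime_pow hp hp2 hΔ (p ^ 2 * c) (l + 1)
  rw [Int.cast_mul, Int.cast_pow, Int.cast_natCast] at hprim
  have hsplit := Set.ncard_sdiff_add_ncard_of_subset (primitiveNormFiber_subset
    (Δ : ZMod (p ^ (l + 2))) (p ^ 2 * c))
  rw [ncard_normFiber_sdiff_primitiveNormFiber hp, hprim] at hsplit
  have hnormCount : normCount p Δ T l = (normFiber (Δ : ZMod (p ^ l)) c).ncard := by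
    simp [normCount, c]
  rw [normCount, hc, ← hsplit, hnormCount]
  push_cast
  rw [← hconic]
  push_cast
  ring

end NormCount

section GeneratingFunction

lemma recurrence_value_eq {K : Type*} [Field K] {q ε a w : K} (hε : ε ^ 2 = 1) (hq : q ≠ 0)
    (ha : 1 - a ≠ 0) (hw : 1 - w ≠ 0) (haw : 1 - ε * a * w ≠ 0) :
    (1 + (1 - ε / q) * w / (1 - w)
        + a * (1 + (1 + (1 - 1 / q) * ε) * w + (1 - 1 / q) * (1 + ε) * w ^ 2 / (1 - w)) / (1 - a))
        / (1 - a * w ^ 2)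
      = (1 - ε * w / q) * (1 - a ^ 2 * w ^ 2)
        / ((1 - w) * (1 - a) * (1 - a * w ^ 2) * (1 - ε * a * w)) := by
  have hnumerator : 1 + (1 - ε / q) * w / (1 - w)
        + a * (1 + (1 + (1 - 1 / q) * ε) * w + (1 - 1 / q) * (1 + ε) * w ^ 2 / (1 - w)) / (1 - a)
      = (1 - ε * w / q) * (1 + ε * a * w) / ((1 - w) * (1 - a)) := by
    field_simp
    linear_combination a * w ^ 2 * hε
  have hfactor : 1 - a ^ 2 * w ^ 2 = (1 + ε * a * w) * (1 - ε * a * w) := by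
    linear_combination a ^ 2 * w ^ 2 * hε
  rw [hnumerator, hfactor, ← mul_assoc, mul_div_mul_right _ _ haw, div_div]

variable {p : ℕ} [Fact p.Prime] {Δ : ℤ} {𝕜 : Type*} [NormedField 𝕜] [CompleteSpace 𝕜] {ε a w : 𝕜}

theorem hasSum_normCount_div_pow (hp2 : p ≠ 2) (hΔ : ¬(p : ℤ) ∣ Δ) (hp𝕜 : (p : 𝕜) ≠ 0)
    (hε : ε = quadraticChar (ZMod p) Δ) (ha : ‖a‖ < 1) (hw : ‖w‖ < 1) :
    HasSum (fun x : ℕ × ℕ => a ^ x.1 * (w ^ x.2 * (normCount p Δ x.1 x.2 / p ^ x.2)))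
      ((1 - ε * w / p) * (1 - a ^ 2 * w ^ 2)
        / ((1 - w) * (1 - a) * (1 - a * w ^ 2) * (1 - ε * a * w))) := by
  have hε_sq : ε ^ 2 = 1 := by
    have hΔ0 : (Δ : ZMod p) ≠ 0 := mt (ZMod.intCast_zmod_eq_zero_iff_dvd Δ p).1 hΔ
    rw [hε, ← Int.cast_pow, quadraticChar_sq_one hΔ0, Int.cast_one]
  have hε_norm : ‖ε‖ = 1 := (pow_eq_one_iff_of_nonneg (norm_nonneg ε) two_ne_zero).1 (by
    rw [← norm_pow, hε_sq, norm_one])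
  have haw : ‖ε * a * w‖ < 1 := by
    rw [norm_mul, norm_mul, hε_norm, one_mul]
    exact mul_lt_one_of_nonneg_of_lt_one_left (norm_nonneg a) ha hw.le
  have hcast {n : ℕ} {k : ℤ} (h : (n : ℤ) = k) : (n : 𝕜) = k := by
    rw [← Int.cast_natCast, h]
  rw [← recurrence_value_eq hε_sq hp𝕜 (isUnit_one_sub_of_norm_lt_one ha).ne_zero
    (isUnit_one_sub_of_norm_lt_one hw).ne_zero (isUnit_one_sub_of_norm_lt_one haw).ne_zero]
  refine hasSum_of_recurrence (M := fun T l => normCount p Δ T l / (p : 𝕜) ^ l) ha hw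
    (fun T => ?_) (fun l => ?_) (fun T => ?_) fun T l => ?_
  · rw [normCount_zero_right, Nat.cast_one, pow_zero, div_one]
  · rw [hcast (normCount_zero_succ hp2 hΔ l), hε]
    push_cast
    field_simp
    ring
  · rw [hcast (normCount_succ_one hp2 Δ T), hε]
    push_cast
    field_simp
  · rw [hcast (normCount_succ_add_two hp2 hΔ T l), hε]
    push_cast
    field_simp
    ring

end GeneratingFunction

open Classical in
theorem stmt_12_general {𝕜 : Type*} [NormedField 𝕜] [CompleteSpace 𝕜] (p : ℕ) (hp : p.Prime)
    (hp2 : p ≠ 2) (hp𝕜 : (p : 𝕜) ≠ 0) (Δ : ℤ) (hΔ : ¬(p : ℤ) ∣ Δ) (ε : 𝕜)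
    (hε : ε = if IsSquare (Δ : ZMod p) then 1 else -1)
    (a z : 𝕜) (ha : ‖a‖ < 1) (w : 𝕜) (hw : w = z / p) (hw1 : ‖w‖ < 1) :
    HasSum
      (fun Tℓ : ℕ × ℕ => a ^ Tℓ.1 * z ^ Tℓ.2 *
        ((Nat.card {xy : ZMod (p ^ Tℓ.2) × ZMod (p ^ Tℓ.2) //
            xy.1 ^ 2 - (Δ : ZMod (p ^ Tℓ.2)) * xy.2 ^ 2
              = ((p ^ (2 * Tℓ.1) : ℕ) : ZMod (p ^ Tℓ.2))} : 𝕜)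
          / p ^ (2 * Tℓ.2)))
      ((1 - ε * w / p) * (1 - a ^ 2 * w ^ 2)
        / ((1 - w) * (1 - a) * (1 - a * w ^ 2) * (1 - ε * a * w))) := by
  have : Fact p.Prime := ⟨hp⟩
  have hε_char : ε = quadraticChar (ZMod p) Δ := by
    have hΔ0 : (Δ : ZMod p) ≠ 0 := mt (ZMod.intCast_zmod_eq_zero_iff_dvd Δ p).1 hΔ
    rw [hε]
    split_ifs with hsq
    · rw [(quadraticChar_one_iff_isSquare hΔ0).2 hsq, Int.cast_one]
    · rw [quadraticChar_neg_one_iff_not_isSquare.2 hsq, Int.cast_neg, Int.cast_one]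
  refine (hasSum_normCount_div_pow hp2 hΔ hp𝕜 hε_char ha hw1).congr_fun fun x => ?_
  rw [hw, div_pow, normCount, ← Nat.card_coe_set_eq]
  simp only [normFiber, Set.coe_ofPred]
  field_simp
  ring

open Classical in
theorem stmt_12 (p : ℕ) (hp : p.Prime) (hp2 : p ≠ 2) (Δ : ℤ) (hΔ : ¬ (p : ℤ) ∣ Δ)
    (ε : ℝ) (hε : ε = if IsSquare (Δ : ZMod p) then 1 else -1)
    (a z : ℝ) (ha : |a| < 1) (hz : |z| < 1) (w : ℝ) (hw : w = z / p) :
    HasSum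
      (fun Tℓ : ℕ × ℕ => a ^ Tℓ.1 * z ^ Tℓ.2 *
        ((Nat.card {xy : ZMod (p ^ Tℓ.2) × ZMod (p ^ Tℓ.2) //
            xy.1 ^ 2 - (Δ : ZMod (p ^ Tℓ.2)) * xy.2 ^ 2
              = ((p ^ (2 * Tℓ.1) : ℕ) : ZMod (p ^ Tℓ.2))} : ℝ)
          / p ^ (2 * Tℓ.2)))
      ((1 - ε * w / p) * (1 - a ^ 2 * w ^ 2)
        / ((1 - w) * (1 - a) * (1 - a * w ^ 2) * (1 - ε * a * w))) := by
  refine stmt_12_general p hp hp2 (Nat.cast_ne_zero.2 hp.ne_zero) Δ hΔ ε hε a z ha w hw ?_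
  rw [hw, norm_div, Real.norm_natCast]
  exact (div_le_self (norm_nonneg z) (mod_cast hp.one_le)).trans_lt hz
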